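/- arXiv:2405.12013 — 4 statements merged into one kernel-verified Lean document; each statement's English description precedes it below -/
import Mathlib

section
/- Let n > c₁ > c₂ and n·c₁ > Σ ≥ n·c₂ be natural numbers with Σ even, and write LEG(n,Σ,c₁,c₂) = (e₁,…,eₙ). Then the following are equivalent: (1) for every 1 ≤ k ≤ n, ∑_{i=1}^k eᵢ ≤ k·(k−1) + eₙ·(n−k) + 1; (2) every D = (d₁,…,dₙ) ∈ 𝒟(n,Σ,c₁,c₂) satisfies: for every 1 ≤ k ≤ n, ∑_{i=1}^k dᵢ ≤ k·(k−1) + dₙ·(n−k) + 1. -/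
/-!
The sequence `e = LEG n S c₁ c₂` is extremal in the region in two ways: for every `d` in the region,
each prefix sum of `d` is at most that of `e`, and the last entry of `d` is at least that of `e`.
Hence passing from `e` to `d` decreases the left side of the inequality and increases the right
side, which gives (1) ⇒ (2); conversely `e` itself lies in the region.

Both extremality claims come from the parameters `α` and `r` with
`S = α * c₁ + (c₂ + r) + (n - 1 - α) * c₂` and `r < c₁ - c₂`. For `k ≤ α` the prefix sum of `e` is
the maximal possible value `k * c₁`. For `k > α` the tail of `e` is the minimal possible value
`(n - k) * c₂` and the totals agree. The last entry of `e` exceeds `c₂` only if `α = n - 1`, and then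
the other entries of `d` cannot absorb more than `(n - 1) * c₁` of the total.
-/

/-- Sum of the first `k` entries of a sequence `d` of length `n`. -/
def psum {n : ℕ} (d : Fin n → ℕ) (k : ℕ) : ℕ :=
  ∑ i : Fin n, if (i : ℕ) < k then d i else 0

/-- The Erdős–Gallai inequality `EG_k`:
`∑_{i=1}^k dᵢ ≤ k(k−1) + ∑_{i=k+1}^n min(dᵢ,k)`. -/
def EGineq {n : ℕ} (d : Fin n → ℕ) (k : ℕ) : Prop :=
  psum d k ≤ k * (k - 1) + ∑ i : Fin n, if k ≤ (i : ℕ) then min (d i) k else 0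

/-- The Erdős–Gallai property: `EG_k` holds for all `1 ≤ k ≤ n`. -/
def EGprop {n : ℕ} (d : Fin n → ℕ) : Prop :=
  ∀ k, 1 ≤ k → k ≤ n → EGineq d k

/-- Membership in the region `𝒟(n,S,c₁,c₂)`: non-increasing, entries between
`c₂` and `c₁`, total sum `S`. -/
def memD {n : ℕ} (S c₁ c₂ : ℕ) (d : Fin n → ℕ) : Prop :=
  Antitone d ∧ (∀ i, c₂ ≤ d i ∧ d i ≤ c₁) ∧ ∑ i, d i = S

/-- The least Erdős–Gallai sequence `LEG(n,S,c₁,c₂)`: `α` copies of `c₁`, then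
the single value `a`, then `n−1−α` copies of `c₂`, where
`α = ⌊(S − n·c₂)/(c₁ − c₂)⌋` and `a = S − (α·c₁ + (n−1−α)·c₂)`. -/
def LEG (n S c₁ c₂ : ℕ) : Fin n → ℕ := fun i =>
  if (i : ℕ) < (S - n * c₂) / (c₁ - c₂) then c₁
  else if (i : ℕ) = (S - n * c₂) / (c₁ - c₂) then
    S - ((S - n * c₂) / (c₁ - c₂) * c₁ + (n - 1 - (S - n * c₂) / (c₁ - c₂)) * c₂)
  else c₂

/-- Sum of the entries of `d` that `psum d k` leaves out. -/
def tailSum {n : ℕ} (d : Fin n → ℕ) (k : ℕ) : ℕ :=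
  ∑ i : Fin n, if k ≤ (i : ℕ) then d i else 0

lemma psum_add_tail {n : ℕ} (d : Fin n → ℕ) (k : ℕ) : psum d k + tailSum d k = ∑ i, d i := by
  unfold psum tailSum
  rw [← Finset.sum_add_distrib]
  refine Finset.sum_congr rfl fun i _ => ?_
  split_ifs <;> omega

lemma psum_const {n k : ℕ} (c : ℕ) (hk : k ≤ n) : psum (fun _ : Fin n => c) k = k * c := by
  unfold psum
  rw [Fin.sum_univ_eq_sum_range (fun i => if i < k then c else 0) n, ← Finset.sum_filter]
  have : (Finset.range n).filter (· < k) = Finset.range k := by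
    ext i; simp only [Finset.mem_filter, Finset.mem_range]; omega
  simp [this]

lemma tailSum_const {n k : ℕ} (c : ℕ) (hk : k ≤ n) :
    tailSum (fun _ : Fin n => c) k = (n - k) * c := by
  have h := psum_add_tail (fun _ : Fin n => c) k
  rw [psum_const c hk] at h
  simp only [Finset.sum_const, Finset.card_univ, Fintype.card_fin, smul_eq_mul] at h
  obtain ⟨m, rfl⟩ := Nat.exists_eq_add_of_le hk
  rw [Nat.add_sub_cancel_left]
  linarith [add_mul k m c]

lemma psum_le {n k c : ℕ} {d : Fin n → ℕ} (hk : k ≤ n) (h : ∀ i, d i ≤ c) : psum d k ≤ k * c := by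
  rw [← psum_const c hk]
  refine Finset.sum_le_sum fun i _ => ?_
  split_ifs
  exacts [h i, le_rfl]

lemma le_tailSum {n k c : ℕ} {d : Fin n → ℕ} (hk : k ≤ n) (h : ∀ i, c ≤ d i) :
    (n - k) * c ≤ tailSum d k := by
  rw [← tailSum_const c hk]
  refine Finset.sum_le_sum fun i _ => ?_
  split_ifs
  exacts [h i, le_rfl]

lemma tailSum_last {n : ℕ} (d : Fin n → ℕ) (hn : n - 1 < n) :
    tailSum d (n - 1) = d ⟨n - 1, hn⟩ := by
  unfold tailSum
  rw [Finset.sum_eq_single ⟨n - 1, hn⟩]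
  · simp
  · intro i _ hi
    have : (i : ℕ) ≠ n - 1 := fun h => hi (Fin.ext h)
    rw [if_neg (by omega)]
  · simp

/-- The subtractions in the definition of `LEG` do not truncate: the exceptional entry is `c₂ + r`
for the remainder `r` of the division defining `α`. -/
lemma LEG_spec {n S c₁ c₂ : ℕ} (h2 : c₂ < c₁) (h3 : S < n * c₁) (h4 : n * c₂ ≤ S) :
    ∃ α r, α < n ∧ r < c₁ - c₂ ∧ S = α * c₁ + (c₂ + r) + (n - (α + 1)) * c₂ ∧
      ∀ i : Fin n, LEG n S c₁ c₂ i =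
        if (i : ℕ) < α then c₁ else if (i : ℕ) = α then c₂ + r else c₂ := by
  obtain ⟨δ, rfl⟩ := Nat.exists_eq_add_of_lt h2
  obtain ⟨T, rfl⟩ := Nat.exists_eq_add_of_le h4
  have hδ : c₂ + δ + 1 - c₂ = δ + 1 := by omega
  have hT : n * c₂ + T - n * c₂ = T := by omega
  have hα : T / (δ + 1) < n := by
    rw [Nat.div_lt_iff_lt_mul (by omega)]
    linarith [mul_add n c₂ (δ + 1)]
  have hdiv := Nat.div_add_mod T (δ + 1)
  have hr := Nat.mod_lt T (Nat.succ_pos δ)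
  unfold LEG
  rw [hδ, hT]
  generalize T / (δ + 1) = α at *
  generalize T % (δ + 1) = r at *
  obtain ⟨m, rfl⟩ := Nat.exists_eq_add_of_lt hα
  have hm : α + m + 1 - (α + 1) = m := by omega
  have hm' : α + m + 1 - 1 - α = m := by omega
  have key : (α + m + 1) * c₂ + T = α * (c₂ + δ + 1) + (c₂ + r) + m * c₂ := by
    rw [← hdiv]; ring
  refine ⟨α, r, by omega, hr, by rw [hm]; exact key, fun i => ?_⟩
  rw [hm', key]
  split_ifs <;> omega

/-- Total, prefix sums and tail sums of a sequence of the shape `c₁, …, c₁, a, c₂, …, c₂`. -/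
lemma step_sums {n α a c₁ c₂ : ℕ} {e : Fin n → ℕ} (hα : α < n)
    (he : ∀ i : Fin n, e i = if (i : ℕ) < α then c₁ else if (i : ℕ) = α then a else c₂) :
    (∑ i, e i = α * c₁ + a + (n - (α + 1)) * c₂) ∧
    (∀ k, k ≤ α → psum e k = k * c₁) ∧
    (∀ k, α < k → k ≤ n → tailSum e k = (n - k) * c₂) := by
  refine ⟨?_, fun k hk => ?_, fun k hk hkn => ?_⟩
  · have ha : ∑ i : Fin n, (if (i : ℕ) = α then a else 0) = a := by
      rw [Fin.sum_univ_eq_sum_range (fun i => if i = α then a else 0) n]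
      simp [hα]
    have hsplit : ∑ i, e i = psum (fun _ : Fin n => c₁) α
        + ∑ i : Fin n, (if (i : ℕ) = α then a else 0) + tailSum (fun _ : Fin n => c₂) (α + 1) := by
      unfold psum tailSum
      rw [← Finset.sum_add_distrib, ← Finset.sum_add_distrib]
      refine Finset.sum_congr rfl fun i _ => ?_
      rw [he i]
      beta_reduce
      split_ifs <;> omega
    rw [hsplit, ha, psum_const c₁ hα.le, tailSum_const c₂ hα]
  · rw [← psum_const c₁ (show k ≤ n by omega)]
    refine Finset.sum_congr rfl fun i _ => ?_
    rw [he i]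
    beta_reduce
    split_ifs <;> omega
  · rw [← tailSum_const c₂ hkn]
    refine Finset.sum_congr rfl fun i _ => ?_
    rw [he i]
    beta_reduce
    split_ifs <;> omega

/-- with `E = LEG(n,S,c₁,c₂)`, the following are equivalent:
(1) for all `1 ≤ k ≤ n`, `∑_{i=1}^k eᵢ ≤ k·(k−1) + eₙ·(n−k) + 1`;
(2) every `D ∈ 𝒟(n,S,c₁,c₂)` satisfies, for all `1 ≤ k ≤ n`,
`∑_{i=1}^k dᵢ ≤ k·(k−1) + dₙ·(n−k) + 1`. -/
theorem stmt11 (n S c₁ c₂ : ℕ) (h1 : c₁ < n) (h2 : c₂ < c₁)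
    (h3 : S < n * c₁) (h4 : n * c₂ ≤ S) (hS : Even S) :
    (∀ k, 1 ≤ k → k ≤ n →
        psum (LEG n S c₁ c₂) k ≤
          k * (k - 1) + LEG n S c₁ c₂ ⟨n - 1, by omega⟩ * (n - k) + 1) ↔
    (∀ d : Fin n → ℕ, memD S c₁ c₂ d → ∀ k, 1 ≤ k → k ≤ n →
        psum d k ≤ k * (k - 1) + d ⟨n - 1, by omega⟩ * (n - k) + 1) := by
  obtain ⟨α, r, hα, hr, hSum, he⟩ := LEG_spec h2 h3 h4
  obtain ⟨htot, hpre, htail⟩ := step_sums hα he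
  rw [← hSum] at htot
  constructor
  · intro h d ⟨_, hb, hd⟩ k hk hkn
    have hps : psum d k ≤ psum (LEG n S c₁ c₂) k := by
      rcases Nat.lt_or_ge α k with hαk | hαk
      · have hd_split := psum_add_tail d k
        have he_split := psum_add_tail (LEG n S c₁ c₂) k
        have htail_k := htail k hαk hkn
        have hd_tail := le_tailSum hkn fun i => (hb i).1
        omega
      · rw [hpre k hαk]
        exact psum_le hkn fun i => (hb i).2
    have hlast : LEG n S c₁ c₂ ⟨n - 1, by omega⟩ ≤ d ⟨n - 1, by omega⟩ := by
      by_cases hαn : n - 1 = α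
      · have hd_split := psum_add_tail d (n - 1)
        have he_split := psum_add_tail (LEG n S c₁ c₂) (n - 1)
        rw [tailSum_last _ (by omega)] at hd_split he_split
        have hpre_last := hpre (n - 1) hαn.le
        have hd_pre : psum d (n - 1) ≤ (n - 1) * c₁ := psum_le (by omega) fun i => (hb i).2
        omega
      · rw [he, if_neg (show ¬ n - 1 < α by omega), if_neg hαn]
        exact (hb _).1
    calc psum d k ≤ _ := hps
      _ ≤ _ := h k hk hkn
      _ ≤ _ := by gcongr
  · refine fun h => h _ ⟨fun i j hij => ?_, fun i => ?_, htot⟩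
    · have hij' : (i : ℕ) ≤ j := hij
      rw [he i, he j]
      split_ifs <;> omega
    · rw [he i]
      split_ifs <;> omega
end

section
/- Let n > c₁ ≥ c₂ and n·c₁ ≥ Σ ≥ n·c₂ be natural numbers with Σ even, and suppose some D ∈ 𝒟(n,Σ,c₁,c₂) does not have the Erdős–Gallai property. Then there exists a natural number ℓ with c₂ ≤ ℓ ≤ c₁ such that ℓ·c₁ > ℓ·(ℓ−1) + (n−ℓ)·c₂. -/
lemma sum_fin_ite_lt (n k c : ℕ) (hk : k ≤ n) :
    (∑ i : Fin n, if (i : ℕ) < k then c else 0) = k * c := by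
  rw [Fin.sum_univ_eq_sum_range (fun i => if i < k then c else 0) n, ← Finset.sum_filter]
  have h : (Finset.range n).filter (fun i => i < k) = Finset.range k := by
    ext i
    simp only [Finset.mem_filter, Finset.mem_range]
    omega
  simp [h]

lemma sum_fin_ite_le (n k c : ℕ) :
    (∑ i : Fin n, if k ≤ (i : ℕ) then c else 0) = (n - k) * c := by
  rw [Fin.sum_univ_eq_sum_range (fun i => if k ≤ i then c else 0) n, ← Finset.sum_filter]
  have h : (Finset.range n).filter (fun i => k ≤ i) = Finset.Ico k n := by
    ext i
    simp only [Finset.mem_filter, Finset.mem_range, Finset.mem_Ico]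
    omega
  simp [h]

/-- if some `D ∈ 𝒟(n,S,c₁,c₂)` does not have the Erdős–Gallai
property, then there is `ℓ` with `c₂ ≤ ℓ ≤ c₁` and
`ℓ·c₁ > ℓ·(ℓ−1) + (n−ℓ)·c₂`. -/
theorem stmt13 (n S c₁ c₂ : ℕ) (h1 : c₁ < n) (h2 : c₂ ≤ c₁)
    (h3 : S ≤ n * c₁) (h4 : n * c₂ ≤ S) (hS : Even S)
    (d : Fin n → ℕ) (hd : memD S c₁ c₂ d) (hnotEG : ¬ EGprop d) :
    ∃ ℓ : ℕ, c₂ ≤ ℓ ∧ ℓ ≤ c₁ ∧ ℓ * (ℓ - 1) + (n - ℓ) * c₂ < ℓ * c₁ := by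
  obtain ⟨-, hb, -⟩ := hd
  unfold EGprop EGineq psum at hnotEG
  push Not at hnotEG
  obtain ⟨k, hk1, hkn, hlt⟩ := hnotEG
  have hL : (∑ i : Fin n, if (i : ℕ) < k then d i else 0) ≤ k * c₁ := by
    rw [← sum_fin_ite_lt n k c₁ hkn]
    gcongr with i
    split_ifs
    exacts [(hb i).2, le_rfl]
  have hR : (n - k) * min c₂ k ≤ ∑ i : Fin n, if k ≤ (i : ℕ) then min (d i) k else 0 := by
    rw [← sum_fin_ite_le n k]
    gcongr with i
    split_ifs
    exacts [min_le_min_right k (hb i).1, le_rfl]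
  have key : k * (k - 1) + (n - k) * min c₂ k < k * c₁ := by omega
  have hk_le : k ≤ c₁ := by
    by_contra! h
    have : k * c₁ ≤ k * (k - 1) := Nat.mul_le_mul_left k (by omega)
    omega
  have hle_k : c₂ ≤ k := by
    by_contra! h
    rw [min_eq_right h.le, mul_comm (n - k) k, ← mul_add] at key
    have := Nat.lt_of_mul_lt_mul_left key
    omega
  rw [min_eq_left hle_k] at key
  exact ⟨k, hle_k, hk_le, key⟩
end

section
/- Let n > c₁ ≥ c₂ be natural numbers and suppose some sequence in 𝒟(n,c₁,c₂) is not graphic. Then there exist a sequence E ∈ 𝒟(n,c₁,c₂) and a simple graph G on labeled vertices v₁,…,vₙ with deg(vᵢ) = Eᵢ for all i, together with a set S of vertices of G such that S is a clique of G and the complement of S is an independent set of G (i.e., G is a split graph realizing E). -/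
/-- Membership in the very simple region `𝒟(n,c₁,c₂)`: non-increasing, entries
between `c₂` and `c₁`, even sum. -/
def memDV {n : ℕ} (c₁ c₂ : ℕ) (d : Fin n → ℕ) : Prop :=
  Antitone d ∧ (∀ i, c₂ ≤ d i ∧ d i ≤ c₁) ∧ Even (∑ i, d i)

/-- The degree of the vertex `i` in a simple graph on `Fin n`. -/
noncomputable def degSeq {n : ℕ} (G : SimpleGraph (Fin n)) : Fin n → ℕ :=
  fun i => Nat.card {j : Fin n // G.Adj i j}

/-- A sequence is graphic if some simple graph on the labeled vertex set realizes it. -/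
def IsGraphic {n : ℕ} (d : Fin n → ℕ) : Prop :=
  ∃ G : SimpleGraph (Fin n), ∀ i, degSeq G i = d i

/-- `numR n e` is the number `N(e)` of simple graphs on the labeled vertex set
`v₁,…,vₙ` with degree vector `e` (an integer vector). -/
noncomputable def numR (n : ℕ) (e : Fin n → ℤ) : ℕ :=
  Nat.card {G : SimpleGraph (Fin n) // ∀ i, (degSeq G i : ℤ) = e i}

/-! ### Degrees under edge addition and deletion -/

open Finset Classical in
theorem degSeq_eq_card {n : ℕ} (G : SimpleGraph (Fin n)) (i : Fin n) :
    degSeq G i = #{j | G.Adj i j} := by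
  rw [degSeq, Nat.card_eq_fintype_card, Fintype.card_subtype]

open Finset in
theorem even_sum_degSeq {n : ℕ} (G : SimpleGraph (Fin n)) : Even (∑ i, degSeq G i) := by
  classical
  have h := G.sum_degrees_eq_twice_card_edges
  have h2 : ∀ i, degSeq G i = G.degree i := fun i => by
    rw [degSeq_eq_card, ← SimpleGraph.card_neighborFinset_eq_degree]
    congr 1; ext j; simp
  simp only [h2, h, even_two_mul]

open Finset in
theorem exists_add_edge {n : ℕ} (G : SimpleGraph (Fin n)) {a b : Fin n} (hab : a ≠ b)
    (h : ¬ G.Adj a b) : ∃ H : SimpleGraph (Fin n),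
      (∀ x y, H.Adj x y ↔ G.Adj x y ∨ (x = a ∧ y = b) ∨ (x = b ∧ y = a)) ∧
      ∀ x, degSeq H x = degSeq G x + (if x = a then 1 else 0) + (if x = b then 1 else 0) := by
  classical
  have h' : ¬ G.Adj b a := fun e => h e.symm
  obtain ⟨H, hH⟩ : ∃ H : SimpleGraph (Fin n),
      ∀ x y, H.Adj x y ↔ G.Adj x y ∨ (x = a ∧ y = b) ∨ (x = b ∧ y = a) :=
    ⟨{ Adj := fun x y => G.Adj x y ∨ (x = a ∧ y = b) ∨ (x = b ∧ y = a)
       symm := ⟨fun x y hxy => by have := G.adj_comm x y; tauto⟩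
       loopless := ⟨fun x hx => by
         rcases hx with hx | ⟨rfl, hx⟩ | ⟨rfl, hx⟩
         · exact G.loopless.irrefl x hx
         · exact hab hx
         · exact hab hx.symm⟩ }, fun _ _ => Iff.rfl⟩
  refine ⟨H, hH, fun x => ?_⟩
  rw [degSeq_eq_card, degSeq_eq_card]
  by_cases hxa : x = a
  · subst hxa
    have : ({j | H.Adj x j} : Finset (Fin n)) = insert b ({j | G.Adj x j} : Finset (Fin n)) := by
      ext j; simp [hH, hab]; tauto
    rw [this, card_insert_of_notMem (by simpa using h)]
    simp [hab]
  · by_cases hxb : x = b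
    · subst hxb
      have : ({j | H.Adj x j} : Finset (Fin n)) = insert a ({j | G.Adj x j} : Finset (Fin n)) := by
        ext j; simp [hH, hab.symm]; tauto
      rw [this, card_insert_of_notMem (by simpa using h')]
      simp [hab.symm]
    · simp [hH, hxa, hxb]

theorem exists_del_edge {n : ℕ} (G : SimpleGraph (Fin n)) {a b : Fin n} (h : G.Adj a b) :
    ∃ H : SimpleGraph (Fin n),
      (∀ x y, H.Adj x y ↔ G.Adj x y ∧ ¬ ((x = a ∧ y = b) ∨ (x = b ∧ y = a))) ∧
      ∀ x, degSeq H x + (if x = a then 1 else 0) + (if x = b then 1 else 0) = degSeq G x := by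
  obtain ⟨H, hH⟩ : ∃ H : SimpleGraph (Fin n),
      ∀ x y, H.Adj x y ↔ G.Adj x y ∧ ¬ ((x = a ∧ y = b) ∨ (x = b ∧ y = a)) :=
    ⟨{ Adj := fun x y => G.Adj x y ∧ ¬ ((x = a ∧ y = b) ∨ (x = b ∧ y = a))
       symm := ⟨fun x y hxy => by have := G.adj_comm x y; tauto⟩
       loopless := ⟨fun x hx => G.loopless.irrefl x hx.1⟩ }, fun _ _ => Iff.rfl⟩
  refine ⟨H, hH, fun x => ?_⟩
  obtain ⟨K, hK, hd⟩ := exists_add_edge H (a := a) (b := b) h.ne (by simp [hH])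
  have : K = G := by
    ext x y
    have h' := h.symm
    rw [hK, hH]
    constructor
    · rintro (⟨h, -⟩ | ⟨rfl, rfl⟩ | ⟨rfl, rfl⟩) <;> assumption
    · tauto
  rw [← this, hd]

open Finset in
/-- A vertex of larger degree has a neighbor that can be handed over to a vertex `r` of smaller
degree; whether or not `i` and `r` are adjacent plays no role. -/
theorem exists_private_nbr {n : ℕ} (G : SimpleGraph (Fin n)) {i r : Fin n}
    (h : degSeq G r < degSeq G i) : ∃ u, G.Adj i u ∧ ¬ G.Adj r u ∧ u ≠ r := by
  classical
  by_contra! hc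
  rw [degSeq_eq_card, degSeq_eq_card] at h
  have hsub : ({j | G.Adj i j} : Finset (Fin n)).erase r ⊆
      ({j | G.Adj r j} : Finset (Fin n)).erase i := by
    intro u hu
    simp only [mem_erase, mem_filter, mem_univ, true_and] at hu ⊢
    refine ⟨fun e => ?_, ?_⟩
    · subst e; exact G.loopless.irrefl _ hu.2
    · by_contra h2; exact hu.1 (hc u hu.2 h2)
  have := card_le_card hsub
  by_cases hir : G.Adj i r
  · rw [card_erase_of_mem (by simpa using hir), card_erase_of_mem (by simpa using hir.symm)] at this
    have : 0 < #({j | G.Adj r j} : Finset (Fin n)) := card_pos.2 ⟨i, by simpa using hir.symm⟩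
    omega
  · rw [erase_eq_of_notMem (by simpa using hir),
      erase_eq_of_notMem (by simpa using fun e => hir e.symm)] at this
    omega

/-! ### Saturating the vertices one by one -/

/-- `G` is a partial realization of `d` at stage `v`: no degree exceeds its target, the vertices
before `v` have reached theirs, and the vertices after `v` are independent. -/
structure IsSubreal {n : ℕ} (d : Fin n → ℕ) (v : Fin n) (G : SimpleGraph (Fin n)) : Prop where
  le : ∀ i, degSeq G i ≤ d i
  eq : ∀ i < v, degSeq G i = d i
  indep : ∀ i j, v < i → v < j → ¬ G.Adj i j

open Finset in
/-- A partial realization in which the degree of `v` is maximal and still deficient has the extremal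
structure of the Erdős–Gallai bound: a clique on `{i ≤ v}`, to which each later vertex is joined
as often as its target degree allows. -/
theorem IsSubreal.improve {n : ℕ} {d : Fin n → ℕ} (hd : Antitone d) (hev : Even (∑ i, d i))
    {v : Fin n} {G : SimpleGraph (Fin n)} (hG : IsSubreal d v G) (hv : degSeq G v < d v)
    (hmax : ∀ H, IsSubreal d v H → degSeq H v ≤ degSeq G v) :
    (∀ i j, i ≤ v → j ≤ v → i ≠ j → G.Adj i j) ∧
      ∀ k, v < k → degSeq G k = min ((v : ℕ) + 1) (d k) := by
  have hlt : ∀ i < v, degSeq G v < degSeq G i := fun i hi => by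
    rw [hG.eq i hi]; exact hv.trans_le (hd hi.le)
  -- Otherwise the edge `vk` can be added.
  have case0 : ∀ k, v < k → degSeq G k < d k → G.Adj v k := by
    intro k hk hdk
    by_contra hn
    obtain ⟨H, hH, hdH⟩ := exists_add_edge G hk.ne hn
    have : IsSubreal d v H := by
      refine ⟨fun x => ?_, fun x hx => ?_, fun x y hx hy => ?_⟩
      · have := hdH x; have := hG.le x
        split_ifs at * <;> grind
      · have := hdH x; have := hG.eq x hx
        grind
      · have := hH x y; have := hG.indep x y hx hy
        grind
    have := hmax H this
    have := hdH v
    simp at this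
    omega
  -- Otherwise replace `iu` by `vu` and `vi`. This raises `deg v` by two and changes no other degree;
  -- if only one unit is missing, parity supplies a deficient `k > v`, and `vk` is removed as well.
  have case1 : ∀ i < v, G.Adj v i := by
    intro i hi
    by_contra hn
    obtain ⟨u, hiu, hvu, huv⟩ := exists_private_nbr G (hlt i hi)
    have hui := hiu.ne'
    obtain ⟨H1, hH1, hd1⟩ := exists_del_edge G hiu
    obtain ⟨H2, hH2, hd2⟩ := exists_add_edge H1 (a := v) (b := u) huv.symm (by grind)
    obtain ⟨H3, hH3, hd3⟩ := exists_add_edge H2 (a := v) (b := i) hi.ne' (by grind)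
    by_cases h2 : degSeq G v + 2 ≤ d v
    · have : IsSubreal d v H3 := by
        refine ⟨fun x => ?_, fun x hx => ?_, fun x y hx hy => ?_⟩
        · have := hd1 x; have := hd2 x; have := hd3 x; have := hG.le x
          grind
        · have := hd1 x; have := hd2 x; have := hd3 x; have := hG.eq x hx
          grind
        · have := hH1 x y; have := hH2 x y; have := hH3 x y; have := hG.indep x y hx hy
          grind
      have := hmax H3 this
      have := hd1 v; have := hd2 v; have := hd3 v
      grind
    · obtain ⟨k, hk, hdk⟩ : ∃ k, v < k ∧ degSeq G k < d k := by
        by_contra! hc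
        have : ∑ i, d i = ∑ i, degSeq G i + 1 := by
          have e : ∑ x ∈ univ.erase v, d x = ∑ x ∈ univ.erase v, degSeq G x := by
            refine sum_congr rfl fun x hx => ?_
            rcases lt_or_gt_of_ne (ne_of_mem_erase hx) with hx | hx
            · exact (hG.eq x hx).symm
            · exact le_antisymm (hc x hx) (hG.le x)
          have e1 := add_sum_erase univ d (mem_univ v)
          have e2 := add_sum_erase univ (fun x => degSeq G x) (mem_univ v)
          omega
        rw [this] at hev
        have := even_sum_degSeq G
        grind
      have hvk := case0 k hk hdk
      obtain ⟨H4, hH4, hd4⟩ := exists_del_edge H3 (a := v) (b := k) (by grind)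
      have : IsSubreal d v H4 := by
        refine ⟨fun x => ?_, fun x hx => ?_, fun x y hx hy => ?_⟩
        · have := hd1 x; have := hd2 x; have := hd3 x; have := hd4 x; have := hG.le x
          grind
        · have := hd1 x; have := hd2 x; have := hd3 x; have := hd4 x; have := hG.eq x hx
          grind
        · have := hH1 x y; have := hH2 x y; have := hH3 x y; have := hH4 x y
          have := hG.indep x y hx hy
          grind
      have := hmax H4 this
      have := hd1 v; have := hd2 v; have := hd3 v; have := hd4 v
      grind
  -- Otherwise replace `iu` and `jw` by `ij` and `vu`. Both `u` and `w` lie after `v`, where a degree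
  -- may drop; they may coincide.
  have case3 : ∀ i j, i < v → j < v → i ≠ j → G.Adj i j := by
    intro i j hi hj hij
    by_contra hn
    obtain ⟨u, hiu, hvu, huv⟩ := exists_private_nbr G (hlt i hi)
    obtain ⟨w, hjw, hvw, hwv⟩ := exists_private_nbr G (hlt j hj)
    have hu : v < u := by
      by_contra h; exact hvu (case1 u (lt_of_le_of_ne (not_lt.1 h) huv))
    have hw : v < w := by
      by_contra h; exact hvw (case1 w (lt_of_le_of_ne (not_lt.1 h) hwv))
    obtain ⟨H1, hH1, hd1⟩ := exists_del_edge G hiu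
    obtain ⟨H2, hH2, hd2⟩ := exists_del_edge H1 (a := j) (b := w) (by grind)
    obtain ⟨H3, hH3, hd3⟩ := exists_add_edge H2 (a := i) (b := j) hij (by grind)
    obtain ⟨H4, hH4, hd4⟩ := exists_add_edge H3 (a := v) (b := u) hu.ne (by grind)
    have : IsSubreal d v H4 := by
      refine ⟨fun x => ?_, fun x hx => ?_, fun x y hx hy => ?_⟩
      · have := hd1 x; have := hd2 x; have := hd3 x; have := hd4 x; have := hG.le x
        grind
      · have := hd1 x; have := hd2 x; have := hd3 x; have := hd4 x; have := hG.eq x hx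
        grind
      · have := hH1 x y; have := hH2 x y; have := hH3 x y; have := hH4 x y
        have := hG.indep x y hx hy
        grind
    have := hmax H4 this
    have := hd1 v; have := hd2 v; have := hd3 v; have := hd4 v
    grind
  refine ⟨fun i j hi hj hij => ?_, fun k hk => ?_⟩
  · rcases hi.lt_or_eq with hi | rfl
    · rcases hj.lt_or_eq with hj | rfl
      · exact case3 i j hi hj hij
      · exact (case1 i hi).symm
    · exact case1 j (lt_of_le_of_ne hj hij.symm)
  · classical
    have hsub : ({j | G.Adj k j} : Finset (Fin n)) ⊆ Iic v := by
      intro j hj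
      by_contra h
      exact hG.indep k j hk (by simpa using h) (by simpa using hj)
    have hle : degSeq G k ≤ v + 1 := by
      rw [degSeq_eq_card, ← Fin.card_Iic]; exact card_le_card hsub
    by_contra hne
    have hkd : degSeq G k < d k := by have := hG.le k; omega
    have hkr : degSeq G k < v + 1 := by have := hG.le k; omega
    have hvk := case0 k hk hkd
    obtain ⟨i, hi, hki⟩ : ∃ i < v, ¬ G.Adj k i := by
      by_contra! hc
      have : Iic v ⊆ ({j | G.Adj k j} : Finset (Fin n)) := by
        intro j hj
        simp only [mem_filter, mem_univ, true_and]
        rcases (mem_Iic.1 hj).lt_or_eq with hj | rfl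
        · exact hc j hj
        · exact hvk.symm
      have := card_le_card this
      rw [Fin.card_Iic, ← degSeq_eq_card] at this
      omega
    -- Replace `iu` by `vu` and `ik`: only `deg v` and `deg k` grow, and both are deficient.
    obtain ⟨u, hiu, hvu, huv⟩ := exists_private_nbr G (hlt i hi)
    have hik : ¬ G.Adj i k := fun e => hki e.symm
    obtain ⟨H1, hH1, hd1⟩ := exists_del_edge G hiu
    obtain ⟨H2, hH2, hd2⟩ := exists_add_edge H1 (a := v) (b := u) huv.symm (by grind)
    obtain ⟨H3, hH3, hd3⟩ := exists_add_edge H2 (a := i) (b := k) (hi.trans hk).ne (by grind)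
    have : IsSubreal d v H3 := by
      refine ⟨fun x => ?_, fun x hx => ?_, fun x y hx hy => ?_⟩
      · have := hd1 x; have := hd2 x; have := hd3 x; have := hG.le x
        grind
      · have := hd1 x; have := hd2 x; have := hd3 x; have := hG.eq x hx
        grind
      · have := hH1 x y; have := hH2 x y; have := hH3 x y; have := hG.indep x y hx hy
        grind
    have := hmax H3 this
    have := hd1 v; have := hd2 v; have := hd3 v
    grind

open Finset in
/-- The sufficiency half of the Erdős–Gallai theorem, with the entries of `d` replaced by the
bounds `c₁` and `c₂`. -/
theorem exists_index_of_not_isGraphic {n c₁ c₂ : ℕ} {d : Fin n → ℕ} (hd : memDV c₁ c₂ d)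
    (hng : ¬ IsGraphic d) :
    ∃ k, 1 ≤ k ∧ k ≤ n ∧ k * (k - 1) + (n - k) * min k c₂ < k * c₁ := by
  classical
  by_contra! hc
  obtain ⟨hanti, hbd, hev⟩ := hd
  -- For `r = n` this is a realization of `d`.
  have key : ∀ r ≤ n, ∃ G : SimpleGraph (Fin n), (∀ i, degSeq G i ≤ d i) ∧
      (∀ i : Fin n, (i : ℕ) < r → degSeq G i = d i) ∧
      ∀ i j : Fin n, r ≤ (i : ℕ) → r ≤ (j : ℕ) → ¬ G.Adj i j := by
    intro r
    induction r with
    | zero =>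
      intro _
      exact ⟨⊥, fun i => by simp [degSeq_eq_card], by simp, by simp⟩
    | succ r ih =>
      intro hr
      obtain ⟨G₀, h1, h2, h3⟩ := ih (by omega)
      let v : Fin n := ⟨r, hr⟩
      have hne : ({G | IsSubreal d v G} : Finset (SimpleGraph (Fin n))).Nonempty :=
        ⟨G₀, by
          simp only [mem_filter, mem_univ, true_and]
          exact ⟨h1, fun i hi => h2 i hi, fun i j hi hj => h3 i j (le_of_lt hi) (le_of_lt hj)⟩⟩
      obtain ⟨G, hG, hmax⟩ := exists_max_image _ (fun G => degSeq G v) hne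
      simp only [mem_filter, mem_univ, true_and] at hG hmax
      rcases (hG.le v).lt_or_eq with hv | hv
      · exfalso
        obtain ⟨hcl, hmin⟩ := hG.improve hanti hev hv hmax
        -- Count the adjacent pairs `(i, j)` with `i ≤ v` from both sides.
        have hdc := sum_card_bipartiteAbove_eq_sum_card_bipartiteBelow (s := Iic v)
          (t := (univ : Finset (Fin n))) G.Adj
        have hlow : (r + 1) * r + (n - (r + 1)) * min (r + 1) c₂ ≤
            ∑ j, #(bipartiteBelow G.Adj (Iic v) j) := by
          have hsplit : (univ : Finset (Fin n)) = Iic v ∪ Ioi v := by ext x; simp [le_or_gt]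
          rw [hsplit, sum_union (disjoint_left.2 (by simp))]
          refine add_le_add ?_ ?_
          · have : #(Iic v) • r ≤ ∑ j ∈ Iic v, #(bipartiteBelow G.Adj (Iic v) j) := by
              refine card_nsmul_le_sum _ _ _ fun j hj => ?_
              have hsub : (Iic v).erase j ⊆ bipartiteBelow G.Adj (Iic v) j := by
                intro i hi
                simp only [mem_erase, mem_Iic] at hi hj
                simp only [mem_bipartiteBelow, mem_Iic]
                exact ⟨hi.2, hcl i j hi.2 hj hi.1⟩
              have := card_le_card hsub
              rw [card_erase_of_mem hj, Fin.card_Iic] at this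
              simpa [v] using this
            simpa [v, Fin.card_Iic] using this
          · have : #(Ioi v) • min (r + 1) c₂ ≤
                ∑ j ∈ Ioi v, #(bipartiteBelow G.Adj (Iic v) j) := by
              refine card_nsmul_le_sum _ _ _ fun j hj => ?_
              have hj := mem_Ioi.1 hj
              have hsub : ({i | G.Adj j i} : Finset (Fin n)) ⊆
                  bipartiteBelow G.Adj (Iic v) j := by
                intro i hi
                have hi : G.Adj j i := by simpa using hi
                simp only [mem_bipartiteBelow, mem_Iic]
                exact ⟨by by_contra h; exact hG.indep j i hj (not_le.1 h) hi, hi.symm⟩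
              have := card_le_card hsub
              rw [← degSeq_eq_card, hmin j hj] at this
              exact le_trans (min_le_min_left _ (hbd j).1) this
            have hcard : #(Ioi v) = n - (r + 1) := by
              rw [Fin.card_Ioi]; simp only [v]; omega
            rwa [hcard, smul_eq_mul] at this
        have hup : ∑ i ∈ Iic v, #(bipartiteAbove G.Adj univ i) < (r + 1) * c₁ := by
          have : ∑ i ∈ Iic v, #(bipartiteAbove G.Adj univ i) < ∑ i ∈ Iic v, c₁ := by
            have e : ∀ i, #(bipartiteAbove G.Adj univ i) = degSeq G i := fun i => by
              rw [degSeq_eq_card]; rfl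
            simp only [e]
            exact sum_lt_sum (fun i _ => (hG.le i).trans (hbd i).2)
              ⟨v, by simp, hv.trans_le (hbd v).2⟩
          simpa [v] using this
        have := hc (r + 1) (by omega) hr
        rw [Nat.add_sub_cancel] at this
        omega
      · refine ⟨G, hG.le, fun i hi => ?_, fun i j hi hj => hG.indep i j hi hj⟩
        rcases (Nat.lt_succ_iff.1 hi).lt_or_eq with hi | hi
        · exact hG.eq i hi
        · rw [show i = v from Fin.ext hi, hv]
  obtain ⟨G, -, h, -⟩ := key n le_rfl
  exact hng ⟨G, fun i => h i i.2⟩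

/-! ### The balanced split graph -/

/-- The split graph on `Fin n` with clique `{i < k}` and independent set `{j ≥ k}`, where the
vertex `k + t` is joined to the clique vertices `(t * c + s) % k` for `s < c`. The `c` neighbors
are distinct when `c ≤ k`. `SimpleGraph.fromRel` symmetrizes the relation and removes loops. -/
def cyclicSplit (n k c : ℕ) : SimpleGraph (Fin n) :=
  SimpleGraph.fromRel fun i j =>
    (i : ℕ) < k ∧ ((j : ℕ) < k ∨ k ≤ (j : ℕ) ∧ ∃ s < c, (((j : ℕ) - k) * c + s) % k = i)

open Finset in
theorem degSeq_cyclicSplit_of_le {n k c : ℕ} (hk : 1 ≤ k) (hkn : k ≤ n) (hc : c ≤ k)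
    (j : Fin n) (hj : k ≤ (j : ℕ)) : degSeq (cyclicSplit n k c) j = c := by
  classical
  rw [degSeq_eq_card]
  have himg : (({i | (cyclicSplit n k c).Adj j i} : Finset (Fin n)).map Fin.valEmbedding) =
      (range c).image fun s => (((j : ℕ) - k) * c + s) % k := by
    ext m
    simp only [mem_map, mem_filter, mem_univ, true_and, mem_image, mem_range,
      Fin.valEmbedding_apply, cyclicSplit, SimpleGraph.fromRel_adj]
    constructor
    · rintro ⟨i, ⟨-, h | h⟩, rfl⟩
      · omega
      · rcases h with ⟨h1, h | ⟨-, h⟩⟩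
        · omega
        · exact h
    · rintro ⟨s, hs, rfl⟩
      have hlt := Nat.mod_lt (((j : ℕ) - k) * c + s) hk
      refine ⟨⟨_, hlt.trans_le hkn⟩, ⟨?_, Or.inr ⟨hlt, Or.inr ⟨hj, s, hs, rfl⟩⟩⟩, rfl⟩
      intro e
      have := congrArg Fin.val e
      simp only at this
      omega
  rw [← card_map Fin.valEmbedding, himg, card_image_of_injOn, card_range]
  intro s hs t ht hst
  simp only [coe_range, Set.mem_Iio] at hs ht
  have : s ≡ t [MOD k] := Nat.ModEq.add_left_cancel' _ hst
  exact this.eq_of_lt_of_lt (hs.trans_le hc) (ht.trans_le hc)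

open Finset in
/-- The neighbors of a clique vertex `i` outside the clique correspond to the numbers
`m < (n - k) * c` in the residue class of `i` modulo `k`, through `m ↦ k + m / c`. -/
theorem degSeq_cyclicSplit_of_lt {n k c : ℕ} (hk : 1 ≤ k) (hkn : k ≤ n) (hc : c ≤ k)
    (i : Fin n) (hi : (i : ℕ) < k) :
    degSeq (cyclicSplit n k c) i =
      (k - 1) + ((n - k) * c / k + if (i : ℕ) < (n - k) * c % k then 1 else 0) := by
  classical
  have hcount := Nat.count_modEq_card ((n - k) * c) hk i
  rw [Nat.mod_eq_of_lt hi] at hcount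
  rw [← hcount, Nat.count_eq_card_filter_range, degSeq_eq_card, ← card_map Fin.valEmbedding]
  have himg : (({j | (cyclicSplit n k c).Adj i j} : Finset (Fin n)).map Fin.valEmbedding) =
      (range k).erase i ∪
        ({m ∈ range ((n - k) * c) | m ≡ i [MOD k]} : Finset ℕ).image fun m => k + m / c := by
    ext x
    simp only [mem_map, mem_filter, mem_univ, true_and, mem_image, mem_range, mem_union,
      mem_erase, Fin.valEmbedding_apply, cyclicSplit, SimpleGraph.fromRel_adj]
    constructor
    · rintro ⟨j, ⟨hij, h⟩, rfl⟩
      by_cases hj : (j : ℕ) < k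
      · exact Or.inl ⟨fun e => hij (Fin.ext e.symm), hj⟩
      · rcases h with ⟨-, h | ⟨hj, s, hs, h⟩⟩ | h
        · omega
        · refine Or.inr ⟨(j - k) * c + s, ⟨?_, ?_⟩, ?_⟩
          · have : (j : ℕ) - k + 1 ≤ n - k := by omega
            have := Nat.mul_le_mul_right c this
            rw [Nat.add_mul] at this
            omega
          · rw [Nat.ModEq, h, Nat.mod_eq_of_lt hi]
          · rw [mul_comm, Nat.mul_add_div (by omega), Nat.div_eq_of_lt hs]; omega
        · omega
    · rintro (⟨hx, hxk⟩ | ⟨m, ⟨hm, hmi⟩, rfl⟩)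
      · exact ⟨⟨x, by omega⟩, ⟨fun e => hx (congrArg Fin.val e).symm, Or.inl ⟨hi, Or.inl hxk⟩⟩, rfl⟩
      · have hc0 : 0 < c := by
          rcases Nat.eq_zero_or_pos c with rfl | h
          · simp at hm
          · exact h
        have hlt : m / c < n - k := (Nat.div_lt_iff_lt_mul hc0).2 hm
        refine ⟨⟨k + m / c, by omega⟩, ⟨fun e => ?_, Or.inl ⟨hi, Or.inr ⟨by simp, m % c,
          Nat.mod_lt _ hc0, ?_⟩⟩⟩, rfl⟩
        · have := congrArg Fin.val e
          simp only at this
          exact absurd hi (by rw [this]; exact not_lt.2 (Nat.le_add_right _ _))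
        · simp only [Nat.add_sub_cancel_left]
          rw [mul_comm, Nat.div_add_mod, hmi, Nat.mod_eq_of_lt hi]
  rw [himg, card_union_of_disjoint, card_erase_of_mem (by simpa using hi), card_range,
    card_image_of_injOn]
  · intro m hm m' hm' h
    simp only [coe_filter, mem_range, Set.mem_ofPred_eq] at hm hm'
    have hc0 : 0 < c := by
      rcases Nat.eq_zero_or_pos c with rfl | h
      · simp at hm
      · exact h
    have hq : m / c = m' / c := by simpa using h
    have e1 := Nat.div_add_mod m c
    have e2 := Nat.div_add_mod m' c
    have h3 : c * (m / c) + m % c ≡ c * (m / c) + m' % c [MOD k] := by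
      rw [e1, hq, e2]; exact hm.2.trans hm'.2.symm
    -- Numbers with the same quotient by `c ≤ k` that agree modulo `k` are equal.
    have h4 := (Nat.ModEq.add_left_cancel' _ h3).eq_of_lt_of_lt
      ((Nat.mod_lt _ hc0).trans_le hc) ((Nat.mod_lt _ hc0).trans_le hc)
    rw [← e1, ← e2, hq, h4]
  · rw [disjoint_left]
    intro x hx hx'
    simp only [mem_erase, mem_range, mem_image] at hx hx'
    obtain ⟨m, -, rfl⟩ := hx'
    exact absurd hx.2 (not_lt.2 (Nat.le_add_right _ _))

/-- if some sequence in `𝒟(n,c₁,c₂)` is not graphic, then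
`𝒟(n,c₁,c₂)` contains a sequence `E` realized by a split graph `G`: there is a
vertex set `s` which is a clique of `G` whose complement is independent. -/
theorem stmt14 (n c₁ c₂ : ℕ) (h1 : c₁ < n) (h2 : c₂ ≤ c₁)
    (hne : ∃ d : Fin n → ℕ, memDV c₁ c₂ d ∧ ¬ IsGraphic d) :
    ∃ (E : Fin n → ℕ) (G : SimpleGraph (Fin n)) (s : Set (Fin n)),
      memDV c₁ c₂ E ∧ (∀ i, degSeq G i = E i) ∧
      G.IsClique s ∧ (∀ i ∉ s, ∀ j ∉ s, i ≠ j → ¬ G.Adj i j) := by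
  obtain ⟨d, hd, hng⟩ := hne
  obtain ⟨k, hk1, hkn, hk⟩ := exists_index_of_not_isGraphic hd hng
  -- For `k < c₂` the inequality would read `k * ((k - 1) + (n - k)) < k * c₁`, against `c₁ < n`.
  have hck : c₂ ≤ k := by
    by_contra h
    rw [min_eq_left (by omega), mul_comm (n - k), ← Nat.mul_add] at hk
    have := Nat.lt_of_mul_lt_mul_left hk
    omega
  rw [min_eq_right hck] at hk
  have hD1 := degSeq_cyclicSplit_of_lt hk1 hkn hck
  have hD2 := degSeq_cyclicSplit_of_le hk1 hkn hck
  set M := (n - k) * c₂ with hM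
  have hlow : c₂ ≤ k - 1 + M / k := by
    rcases hck.lt_or_eq with h | h
    · exact le_trans (by omega) (Nat.le_add_right _ _)
    · rw [hM, h, Nat.mul_div_cancel _ hk1]; omega
  have hup : ∀ i : ℕ, k - 1 + (M / k + if i < M % k then 1 else 0) ≤ c₁ := by
    intro i
    have e := Nat.div_add_mod M k
    have hlt : k - 1 + M / k ≤ c₁ := by
      refine le_of_mul_le_mul_left ?_ hk1
      rw [Nat.mul_add]; omega
    split_ifs with h
    · have : k - 1 + M / k < c₁ := by
        refine lt_of_mul_lt_mul_left (a := k) ?_ (Nat.zero_le k)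
        rw [Nat.mul_add]; omega
      omega
    · omega
  refine ⟨degSeq (cyclicSplit n k c₂), cyclicSplit n k c₂, {i | (i : ℕ) < k},
    ⟨fun i j hij => ?_, fun i => ?_, even_sum_degSeq _⟩, fun _ => rfl, fun i hi j hj hij => ?_,
    fun i hi j hj _ h => ?_⟩
  · have hij : (i : ℕ) ≤ j := hij
    by_cases hj : (j : ℕ) < k
    · rw [hD1 i (by omega), hD1 j hj]
      split_ifs <;> omega
    · rw [hD2 j (by omega)]
      by_cases hi : (i : ℕ) < k
      · rw [hD1 i hi]; omega
      · rw [hD2 i (by omega)]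
  · by_cases hi : (i : ℕ) < k
    · rw [hD1 i hi]
      exact ⟨by omega, hup i⟩
    · rw [hD2 i (by omega)]
      exact ⟨le_rfl, h2⟩
  · exact ⟨hij, Or.inl ⟨hi, Or.inl hj⟩⟩
  · rcases h.2 with h | h
    · exact hi h.1
    · exact hj h.1
end

section
/- Let D = (d₁,…,dₙ) be a graphic sequence of natural numbers. Then |𝔾(D^{++})| ≤ n²·(|𝔾(D^{+−})| + |𝒢(D)|) and |𝔾(D^{−−})| ≤ n²·(|𝔾(D^{+−})| + |𝒢(D)|). -/
/-- `G` has (integer) degree vector `e`. -/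
def hasDeg {n : ℕ} (G : SimpleGraph (Fin n)) (e : Fin n → ℤ) : Prop :=
  ∀ k, (degSeq G k : ℤ) = e k

/-- The number of simple graphs on `Fin n` satisfying the predicate `P`. -/
noncomputable def cardG (n : ℕ) (P : SimpleGraph (Fin n) → Prop) : ℕ :=
  Nat.card {G : SimpleGraph (Fin n) // P G}

/-- If every graph with property `P` is determined by a pair of vertices and a graph with property
`Q` or `R`, through a fixed reconstruction `f`, then there are at most `n²` times as many of the
former as of the latter. -/
lemma cardG_le_of_reconstruct {n : ℕ} {P Q R : SimpleGraph (Fin n) → Prop}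
    (f : Fin n → Fin n → SimpleGraph (Fin n) → SimpleGraph (Fin n))
    (h : ∀ G, P G → ∃ a b H, (Q H ∨ R H) ∧ f a b H = G) :
    cardG n P ≤ n ^ 2 * (cardG n Q + cardG n R) := by
  have key : ∀ G : {G // P G}, ∃ x : (Fin n × Fin n) × ({H // Q H} ⊕ {H // R H}),
      f x.1.1 x.1.2 (x.2.elim Subtype.val Subtype.val) = G.1 := by
    rintro ⟨G, hG⟩
    obtain ⟨a, b, H, hQ | hR, rfl⟩ := h G hG
    · exact ⟨((a, b), Sum.inl ⟨H, hQ⟩), rfl⟩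
    · exact ⟨((a, b), Sum.inr ⟨H, hR⟩), rfl⟩
  choose F hF using key
  have inj : Function.Injective F := fun G G' e => Subtype.ext (by rw [← hF G, ← hF G', e])
  have := Nat.card_le_card_of_injective F inj
  simpa [cardG, Nat.card_prod, Nat.card_sum, sq] using this

open Classical in
lemma degSeq_eq_sum {n : ℕ} (G : SimpleGraph (Fin n)) (k : Fin n) :
    degSeq G k = ∑ j, if G.Adj k j then 1 else 0 := by
  simp [degSeq, Fintype.card_subtype]

lemma degSeq_sup_edge {n : ℕ} (H : SimpleGraph (Fin n)) {a b : Fin n} (hab : a ≠ b)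
    (hn : ¬ H.Adj a b) (k : Fin n) :
    degSeq (H ⊔ SimpleGraph.edge a b) k
      = degSeq H k + (if k = a then 1 else 0) + (if k = b then 1 else 0) := by
  classical
  have hn' : ¬ H.Adj b a := fun h => hn h.symm
  have e1 : (if k = a then 1 else 0) = ∑ j : Fin n, if k = a ∧ j = b then 1 else 0 := by
    by_cases h : k = a <;> simp [h]
  have e2 : (if k = b then 1 else 0) = ∑ j : Fin n, if k = b ∧ j = a then 1 else 0 := by
    by_cases h : k = b <;> simp [h]
  rw [degSeq_eq_sum, degSeq_eq_sum, e1, e2, ← Finset.sum_add_distrib, ← Finset.sum_add_distrib]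
  refine Finset.sum_congr rfl fun j _ => ?_
  simp only [SimpleGraph.sup_adj, SimpleGraph.edge_adj]
  grind

lemma sdiff_sup_edge {n : ℕ} {G : SimpleGraph (Fin n)} {a b : Fin n} (h : G.Adj a b) :
    (G \ SimpleGraph.edge a b) ⊔ SimpleGraph.edge a b = G := by
  rw [sdiff_sup_cancel]
  exact (SimpleGraph.edge_le_iff G).2 (Or.inr h)

lemma sup_sdiff_edge {n : ℕ} {G : SimpleGraph (Fin n)} {a b : Fin n} (h : ¬ G.Adj a b) :
    (G ⊔ SimpleGraph.edge a b) \ SimpleGraph.edge a b = G := by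
  have h' : ¬ G.Adj b a := fun e => h e.symm
  ext x y
  simp only [SimpleGraph.sdiff_adj, SimpleGraph.sup_adj, SimpleGraph.edge_adj]
  grind

lemma exists_adj_of_degSeq_pos {n : ℕ} {G : SimpleGraph (Fin n)} {i : Fin n}
    (h : 0 < degSeq G i) : ∃ k, G.Adj i k := by
  obtain ⟨⟨k, hk⟩⟩ := (Nat.card_pos_iff.1 h).1
  exact ⟨k, hk⟩

/-- A vertex whose degree is smaller than in some other graph on the same vertices has a
non-neighbour other than itself. -/
lemma exists_not_adj_of_degSeq_lt {n : ℕ} {G G₀ : SimpleGraph (Fin n)} {i : Fin n}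
    (h : degSeq G i < degSeq G₀ i) : ∃ k, i ≠ k ∧ ¬ G.Adj i k := by
  by_contra! hc
  exact h.not_ge (Nat.card_le_card_of_injective
    (fun x : {j // G₀.Adj i j} => (⟨x.1, hc _ x.2.ne⟩ : {j // G.Adj i j}))
    fun x y e => Subtype.ext (congrArg (fun z : {j // G.Adj i j} => z.1) e))

/-- `|𝔾(D^{++})| ≤ n²·(|𝔾(D^{+−})| + |𝒢(D)|)` and
`|𝔾(D^{−−})| ≤ n²·(|𝔾(D^{+−})| + |𝒢(D)|)`. -/
theorem stmt16 (n : ℕ) (d : Fin n → ℕ) (hg : IsGraphic d) :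
    cardG n (fun G => ∃ i j : Fin n, i ≠ j ∧ hasDeg G
        (fun k => (d k : ℤ) + (if k = i then 1 else 0) + (if k = j then 1 else 0)))
      ≤ n ^ 2 * (cardG n (fun G => ∃ i j : Fin n, i ≠ j ∧ hasDeg G
          (fun k => (d k : ℤ) + (if k = i then 1 else 0) - (if k = j then 1 else 0)))
        + cardG n (fun G => hasDeg G (fun k => (d k : ℤ)))) ∧
    cardG n (fun G => ∃ i j : Fin n, i ≠ j ∧ hasDeg G
        (fun k => (d k : ℤ) - (if k = i then 1 else 0) - (if k = j then 1 else 0)))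
      ≤ n ^ 2 * (cardG n (fun G => ∃ i j : Fin n, i ≠ j ∧ hasDeg G
          (fun k => (d k : ℤ) + (if k = i then 1 else 0) - (if k = j then 1 else 0)))
        + cardG n (fun G => hasDeg G (fun k => (d k : ℤ)))) := by
  obtain ⟨G₀, hG₀⟩ := hg
  constructor
  · -- `G` arises from the smaller graph by putting the deleted edge back
    refine cardG_le_of_reconstruct (fun a b H => H ⊔ SimpleGraph.edge a b) ?_
    rintro G ⟨i, j, hij, hG⟩
    have hi := hG i
    obtain ⟨k, hk⟩ : ∃ k, G.Adj i k := exists_adj_of_degSeq_pos (by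
      simp only [if_true, if_neg hij] at hi
      omega)
    refine ⟨i, k, G \ SimpleGraph.edge i k, ?_, sdiff_sup_edge hk⟩
    have hdeg := degSeq_sup_edge (G \ SimpleGraph.edge i k) hk.ne
      (by simp [SimpleGraph.edge_adj, hk.ne])
    rw [sdiff_sup_edge hk] at hdeg
    by_cases hkj : k = j
    · right
      intro v
      have h1 := hdeg v
      have h2 := hG v
      subst hkj
      grind
    · left
      refine ⟨j, k, Ne.symm hkj, fun v => ?_⟩
      have h1 := hdeg v
      have h2 := hG v
      grind
  · -- `G` arises from the larger graph by removing the added edge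
    refine cardG_le_of_reconstruct (fun a b H => H \ SimpleGraph.edge a b) ?_
    rintro G ⟨i, j, hij, hG⟩
    have hi := hG i
    -- graphicality is needed here: it rules out that `i` is adjacent to all other vertices
    obtain ⟨k, hik, hk⟩ : ∃ k, i ≠ k ∧ ¬ G.Adj i k := exists_not_adj_of_degSeq_lt (G₀ := G₀) (by
      have := hG₀ i
      simp only [if_true, if_neg hij] at hi
      omega)
    refine ⟨i, k, G ⊔ SimpleGraph.edge i k, ?_, sup_sdiff_edge hk⟩
    have hdeg := degSeq_sup_edge G hik hk
    by_cases hkj : k = j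
    · right
      intro v
      have h1 := hdeg v
      have h2 := hG v
      subst hkj
      grind
    · left
      refine ⟨k, j, hkj, fun v => ?_⟩
      have h1 := hdeg v
      have h2 := hG v
      grind
end
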